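/- arXiv:1206.6003 — 3 statements merged into one kernel-verified Lean document; each statement's English description precedes it below -/
import Mathlib

section
/- Let K ≥ 1 be an integer, 2 ≤ p < ∞, Φ ∈ ℝ^{M×N}, w ∈ ℝ^M a vector of positive weights, and μ > 0. Suppose that for each s ∈ {K, 2K, 3K} there exists δ_s ∈ [0,1) such that √(1−δ_s)·‖u‖₂ ≤ μ^{−1}‖Φu‖_{p,w} ≤ √(1+δ_s)·‖u‖₂ for every s-sparse u ∈ ℝ^N, and suppose δ_{2K} + √((1+δ_K)(δ_{2K}+δ_{3K})(p−1)) < 1/3. Then for every x ∈ ℝ^N, every ε ≥ 0 and every e ∈ ℝ^M with ‖e‖_{p,w} ≤ ε, setting y = Φx + e, every minimizer x* of ‖u‖₁ over the set {u ∈ ℝ^N : ‖y − Φu‖_{p,w} ≤ ε} satisfies ‖x* − x‖₂ ≤ 4·K^{−1/2}‖x − x_K‖₁ + 8·ε/μ. -/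
/-!
The proof follows the usual `ℓ1`-minimization argument for compressed sensing, with the inner
product replaced by the norming functional `J` of the point `a = Φ h_U` in the weighted `ℓp` space.

For `p ≥ 2` the `ℓp` norm is `2`-smooth with constant `p - 1`:
`‖a + b‖² ≤ ‖a‖² + 2 J b + (p - 1) ‖b‖²` (`smooth`, `exists_duality`). This follows from bounding
the second derivative of `t ↦ ‖a + t b‖²` by `2 (p - 1) ‖b‖²` with Hölder's inequality; the case
where the line `a + ℝ b` meets `0` is computed by hand. Inserting the restricted isometry bounds and
optimizing in `t` gives almost orthogonality,
`|J (Φ v)| ≤ c μ² ‖h_U‖₂ ‖v‖₂` with `c = √((1 + δK) (δ2K + δ3K) (p - 1))`,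
for `K`-sparse `v` supported off the set `U` of at most `2 K` indices.

Let `h = xstar - x`, let `T₀` be the support of `xK`, and let `U` be `T₀` together with the `K`
largest entries of `h` off `T₀`. The block decomposition (`exists_block`) bounds both `‖h‖₂` and
`-J ∘ Φ` off `U` in terms of `K ^ (-1/2) ‖h‖₁` off `T₀`, and minimality of `xstar` (`cone`) bounds
the latter by `‖h_U‖₂ + 2 K ^ (-1/2) ‖x - xK‖₁`. Since `‖Φ h‖ ≤ 2 ε`, evaluating
`‖a‖² = J a = J (Φ h) - J (Φ (h - h_U))` yields a linear inequality for `‖h_U‖₂`, which the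
condition on the constants solves (`numeric`).
-/

open Finset

/-- Weighted ℓp norm: ‖v‖_{p,w} = (∑ i w_i^p |v_i|^p)^{1/p}. -/
noncomputable def wlpNorm {M : ℕ} (p : ℝ) (w v : Fin M → ℝ) : ℝ :=
  (∑ i, w i ^ p * |v i| ^ p) ^ (1 / p)

/-- `u` is `s`-sparse: at most `s` nonzero entries. -/
def Sparse {N : ℕ} (s : ℕ) (u : Fin N → ℝ) : Prop :=
  (Finset.univ.filter fun i => u i ≠ 0).card ≤ s

/-- ℓ1 norm on ℝ^N. -/
noncomputable def l1norm {N : ℕ} (u : Fin N → ℝ) : ℝ := ∑ i, |u i|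

/-- ℓ2 (Euclidean) norm on ℝ^N. -/
noncomputable def l2norm {N : ℕ} (u : Fin N → ℝ) : ℝ := Real.sqrt (∑ i, (u i) ^ 2)

/-! ### Smoothness of the `ℓp` norm -/

/-- The `p`-th power `∑ |a i|^p` of the (unweighted) `ℓp` norm. -/
noncomputable def psum {M : ℕ} (p : ℝ) (a : Fin M → ℝ) : ℝ := ∑ i, |a i| ^ p

/-- The pairing `∑ |a i|^(p-2) a i b i`, which is `1/p` times the derivative of `psum p` at `a` in
the direction `b`. -/
noncomputable def ppair {M : ℕ} (p : ℝ) (a b : Fin M → ℝ) : ℝ :=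
  ∑ i, |a i| ^ (p - 2) * a i * b i

lemma psum_nonneg {M : ℕ} (p : ℝ) (a : Fin M → ℝ) : 0 ≤ psum p a :=
  Finset.sum_nonneg fun _ _ => by positivity

lemma psum_eq_zero {M : ℕ} {p : ℝ} (hp : 0 < p) {a : Fin M → ℝ} (h : psum p a = 0) (i : Fin M) :
    a i = 0 := by
  have := (Finset.sum_eq_zero_iff_of_nonneg (fun i _ => by positivity)).1 h i (Finset.mem_univ i)
  rw [Real.rpow_eq_zero (abs_nonneg _) hp.ne'] at this
  exact abs_eq_zero.1 this

lemma psum_smul {M : ℕ} (p c : ℝ) (a : Fin M → ℝ) :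
    psum p (fun i => c * a i) = |c| ^ p * psum p a := by
  simp only [psum, Finset.mul_sum, abs_mul]
  exact Finset.sum_congr rfl fun i _ => Real.mul_rpow (abs_nonneg _) (abs_nonneg _)

lemma hasDerivAt_abs_rpow_mul_self {r : ℝ} (hr : 0 ≤ r) (z : ℝ) :
    HasDerivAt (fun z : ℝ => |z| ^ r * z) ((r + 1) * |z| ^ r) z := by
  rcases eq_or_ne z 0 with rfl | hz
  · -- At `0` the difference quotient is `|z|^r`, continuous also when `r = 0` since `0^0 = 1`.
    rw [hasDerivAt_iff_tendsto_slope]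
    have hc : Continuous fun z : ℝ => |z| ^ r := continuous_abs.rpow_const fun _ => Or.inr hr
    have h0 : (r + 1) * |(0:ℝ)| ^ r = |(0:ℝ)| ^ r := by
      rcases hr.eq_or_lt with rfl | h
      · simp
      · simp [Real.zero_rpow h.ne']
    rw [h0]
    refine ((hc.tendsto 0).mono_left nhdsWithin_le_nhds).congr' ?_
    filter_upwards [self_mem_nhdsWithin] with y hy
    have hy : y ≠ 0 := hy
    simp [slope_def_field, hy]
  · have h := ((hasDerivAt_abs hz).rpow_const (p := r) (Or.inl (abs_ne_zero.2 hz))).mul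
      (hasDerivAt_id z)
    refine h.congr_deriv ?_
    have h1 : |z| ^ r = |z| ^ (r - 1) * |z| := by
      rw [← Real.rpow_add_one (abs_ne_zero.2 hz)]; simp
    have h2 : (SignType.sign z : ℝ) * z = |z| := by simp
    change (SignType.sign z : ℝ) * r * |z| ^ (r - 1) * z + |z| ^ r * 1 = (r + 1) * |z| ^ r
    rw [h1]
    linear_combination (r * |z| ^ (r - 1)) * h2

/-- Hölder's inequality in the homogeneous form used for both `s = 1` and `s = 2`. -/
lemma holder_pow {M : ℕ} {p s : ℝ} (hs : 0 < s) (hsp : s ≤ p) (z y : Fin M → ℝ) :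
    ∑ i, |z i| ^ (p - s) * |y i| ^ s ≤ psum p z ^ (1 - s / p) * psum p y ^ (s / p) := by
  have hp : 0 < p := hs.trans_le hsp
  rcases hsp.eq_or_lt with rfl | h
  · simp [psum, hs.ne']
  · have hps : 0 < p - s := sub_pos.2 h
    have hc : (p / (p - s)).HolderConjugate (p / s) := by
      rw [Real.holderConjugate_iff]
      refine ⟨by rw [lt_div_iff₀ hps]; linarith, ?_⟩
      field_simp
      ring
    have := Real.inner_le_Lp_mul_Lq_of_nonneg Finset.univ (f := fun i => |z i| ^ (p - s))
      (g := fun i => |y i| ^ s) hc (fun _ _ => by positivity) (fun _ _ => by positivity)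
    refine this.trans (le_of_eq ?_)
    have e1 : (p - s) * (p / (p - s)) = p := by field_simp
    have e2 : s * (p / s) = p := by field_simp
    have e3 : 1 / (p / (p - s)) = 1 - s / p := by field_simp
    have e4 : 1 / (p / s) = s / p := by field_simp
    simp only [psum, ← Real.rpow_mul (abs_nonneg _), e1, e2, e3, e4]

lemma abs_rpow_sub_two_mul_sq {p : ℝ} (hp : 2 ≤ p) (z : ℝ) : |z| ^ (p - 2) * z * z = |z| ^ p := by
  rcases eq_or_ne z 0 with rfl | hz
  · simp [Real.zero_rpow (by linarith : p ≠ 0)]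
  · have : |z| ^ p = |z| ^ (p - 2) * |z| ^ (2:ℝ) := by
      rw [← Real.rpow_add (abs_pos.2 hz)]; ring_nf
    rw [this, Real.rpow_two, sq_abs]; ring

lemma abs_rpow_sub_two_mul_abs {p : ℝ} (hp : 2 ≤ p) (z : ℝ) :
    |z| ^ (p - 2) * |z| = |z| ^ (p - 1) := by
  rcases eq_or_ne z 0 with rfl | hz
  · simp [Real.zero_rpow (by linarith : p - 1 ≠ 0)]
  · rw [← Real.rpow_add_one (abs_ne_zero.2 hz)]; ring_nf

lemma ppair_self {M : ℕ} {p : ℝ} (hp : 2 ≤ p) (a : Fin M → ℝ) : ppair p a a = psum p a :=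
  Finset.sum_congr rfl fun i _ => abs_rpow_sub_two_mul_sq hp (a i)

lemma abs_ppair_le {M : ℕ} {p : ℝ} (hp : 2 ≤ p) (a b : Fin M → ℝ) :
    |ppair p a b| ≤ psum p a ^ (1 - 1 / p) * psum p b ^ (1 / p) := by
  refine le_trans ?_ (holder_pow one_pos (by linarith) a b)
  refine (Finset.abs_sum_le_sum_abs _ _).trans (Finset.sum_le_sum fun i _ => ?_)
  rw [abs_mul, abs_mul, Real.abs_rpow_of_nonneg (abs_nonneg _), abs_abs,
    abs_rpow_sub_two_mul_abs hp, Real.rpow_one]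

/-- A second-order Taylor upper bound. -/
lemma taylor_le {f f' f'' : ℝ → ℝ} {c : ℝ} (hf : ∀ t, HasDerivAt f (f' t) t)
    (hf' : ∀ t, HasDerivAt f' (f'' t) t) (hb : ∀ t, f'' t ≤ c) :
    f 1 ≤ f 0 + f' 0 + c / 2 := by
  have d1 : ∀ t, HasDerivAt (fun t => c * t - f' t) (c * 1 - f'' t) t := fun t =>
    ((hasDerivAt_id t).const_mul c).sub (hf' t)
  have m1 : Monotone fun t => c * t - f' t := by
    refine monotone_of_deriv_nonneg (fun t => (d1 t).differentiableAt) fun t => ?_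
    rw [(d1 t).deriv]; linarith [hb t]
  have d2 : ∀ t, HasDerivAt (fun t => f' 0 * t + c / 2 * t ^ 2 - f t)
      (f' 0 + c * t - f' t) t := fun t => by
    refine ((((hasDerivAt_id t).const_mul (f' 0)).add
      (((hasDerivAt_id t).pow 2).const_mul (c / 2))).sub (hf t)).congr_deriv ?_
    simp; ring
  have m2 : MonotoneOn (fun t => f' 0 * t + c / 2 * t ^ 2 - f t) (Set.Ici 0) := by
    refine monotoneOn_of_deriv_nonneg (convex_Ici 0)
      (fun t _ => (d2 t).continuousAt.continuousWithinAt)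
      (fun t _ => (d2 t).differentiableAt.differentiableWithinAt) fun t ht => ?_
    rw [interior_Ici] at ht
    have := m1 (le_of_lt ht)
    rw [(d2 t).deriv]
    simp at this
    linarith
  have := m2 (Set.mem_Ici.2 le_rfl) (Set.mem_Ici.2 zero_le_one) zero_le_one
  simp at this
  linarith

/-- The `2`-smoothness inequality with constant `p - 1`, when `0` is not on the line `a + ℝ b`, so
that the squared norm is twice differentiable along it. -/
lemma smooth_aux {M : ℕ} {p : ℝ} (hp : 2 ≤ p) (a b : Fin M → ℝ)
    (hab : ∀ t : ℝ, psum p (fun i => a i + t * b i) ≠ 0) :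
    psum p (fun i => a i + b i) ^ (2 / p) ≤ psum p a ^ (2 / p)
      + 2 * (psum p a ^ (2 / p - 1) * ppair p a b) + (p - 1) * psum p b ^ (2 / p) := by
  have hp0 : p ≠ 0 := by linarith
  let z : ℝ → Fin M → ℝ := fun t i => a i + t * b i
  have dz : ∀ i t, HasDerivAt (fun t => z t i) (b i) t := fun i t => by
    simpa [z] using ((hasDerivAt_id t).mul_const (b i)).const_add (a i)
  have dG : ∀ t, HasDerivAt (fun t => psum p (z t)) (p * ppair p (z t) b) t := fun t => by
    have := HasDerivAt.fun_sum (u := Finset.univ) fun i _ =>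
      (hasDerivAt_abs_rpow (z t i) (p := p) (by linarith)).comp t (dz i t)
    refine this.congr_deriv ?_
    simp only [ppair, Finset.mul_sum]
    exact Finset.sum_congr rfl fun i _ => by ring
  have dH : ∀ t, HasDerivAt (fun t => ppair p (z t) b)
      ((p - 1) * ∑ i, |z t i| ^ (p - 2) * |b i| ^ (2:ℝ)) t := fun t => by
    have := HasDerivAt.fun_sum (u := Finset.univ) fun i _ =>
      ((hasDerivAt_abs_rpow_mul_self (r := p - 2) (by linarith) (z t i)).comp t (dz i t)).mul_const
        (b i)
    refine this.congr_deriv ?_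
    simp only [Finset.mul_sum]
    refine Finset.sum_congr rfl fun i _ => ?_
    rw [Real.rpow_two, sq_abs]; ring
  have dF : ∀ t, HasDerivAt (fun t => psum p (z t) ^ (2 / p))
      (2 * (psum p (z t) ^ (2 / p - 1) * ppair p (z t) b)) t := fun t => by
    refine ((dG t).rpow_const (Or.inl (hab t))).congr_deriv ?_
    field_simp
  have dF' : ∀ t, HasDerivAt (fun t => 2 * (psum p (z t) ^ (2 / p - 1) * ppair p (z t) b))
      (2 * ((p * ppair p (z t) b) * (2 / p - 1) * psum p (z t) ^ (2 / p - 1 - 1) * ppair p (z t) b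
        + psum p (z t) ^ (2 / p - 1) * ((p - 1) * ∑ i, |z t i| ^ (p - 2) * |b i| ^ (2:ℝ)))) t :=
    fun t => (((dG t).rpow_const (Or.inl (hab t))).mul (dH t)).const_mul 2
  have key := taylor_le (c := 2 * ((p - 1) * psum p b ^ (2 / p))) dF dF' fun t => by
    have hG : 0 < psum p (z t) := lt_of_le_of_ne (psum_nonneg _ _) (Ne.symm (hab t))
    have h1 : (p * ppair p (z t) b) * (2 / p - 1) * psum p (z t) ^ (2 / p - 1 - 1)
        * ppair p (z t) b ≤ 0 := by
      have e : (p * ppair p (z t) b) * (2 / p - 1) * psum p (z t) ^ (2 / p - 1 - 1)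
        * ppair p (z t) b = -((p - 2) * psum p (z t) ^ (2 / p - 1 - 1) * ppair p (z t) b ^ 2) := by
        field_simp; ring
      rw [e]
      have : 0 ≤ p - 2 := by linarith
      have : 0 ≤ (p - 2) * psum p (z t) ^ (2 / p - 1 - 1) * ppair p (z t) b ^ 2 := by positivity
      linarith
    have h2 : psum p (z t) ^ (2 / p - 1) * (∑ i, |z t i| ^ (p - 2) * |b i| ^ (2:ℝ))
        ≤ psum p b ^ (2 / p) := by
      refine (mul_le_mul_of_nonneg_left (holder_pow two_pos hp (z t) b) (by positivity)).trans
        (le_of_eq ?_)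
      rw [← mul_assoc, ← Real.rpow_add hG]
      simp
    have h3 := mul_le_mul_of_nonneg_left h2 (by linarith : 0 ≤ p - 1)
    linarith
  simp only [z, zero_mul, add_zero, one_mul] at key
  linarith

/-- `2`-smoothness of the `ℓp` norm with constant `p - 1`, for all `a` and `b`. -/
lemma smooth {M : ℕ} {p : ℝ} (hp : 2 ≤ p) (a b : Fin M → ℝ) :
    psum p (fun i => a i + b i) ^ (2 / p) ≤ psum p a ^ (2 / p)
      + 2 * (psum p a ^ (2 / p - 1) * ppair p a b) + (p - 1) * psum p b ^ (2 / p) := by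
  by_cases hab : ∀ t : ℝ, psum p (fun i => a i + t * b i) ≠ 0
  · exact smooth_aux hp a b hab
  push Not at hab
  obtain ⟨t, ht⟩ := hab
  have hp0 : 0 < p := by linarith
  -- `a` is a multiple of `b`, and everything is explicit.
  have ha : a = fun i => (-t) * b i := funext fun i => by
    linarith [psum_eq_zero hp0 ht i]
  have hsq : ∀ c : ℝ, psum p (fun i => c * b i) ^ (2 / p) = c ^ 2 * psum p b ^ (2 / p) := fun c => by
    rw [psum_smul, Real.mul_rpow (by positivity) (psum_nonneg _ _), ← Real.rpow_mul (abs_nonneg _),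
      mul_div_cancel₀ _ hp0.ne', Real.rpow_two, sq_abs]
  have hA : psum p a ^ (2 / p) = t ^ 2 * psum p b ^ (2 / p) := by rw [ha, hsq]; ring
  have hS : psum p (fun i => a i + b i) ^ (2 / p) = (1 - t) ^ 2 * psum p b ^ (2 / p) := by
    rw [← hsq, ha]; congr 2; ext i; ring
  have hB : 0 ≤ psum p b ^ (2 / p) := Real.rpow_nonneg (psum_nonneg _ _) _
  have hJ : psum p a ^ (2 / p - 1) * ppair p a b = -t * psum p b ^ (2 / p) := by
    rcases (psum_nonneg p a).eq_or_lt with h0 | h0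
    · have hz := psum_eq_zero hp0 h0.symm
      have h1 : ppair p a b = 0 := by simp [ppair, hz]
      have h2 : t ^ 2 * psum p b ^ (2 / p) = 0 := by
        rw [← hA, ← h0, Real.zero_rpow (by positivity)]
      rw [h1, mul_zero]
      rcases mul_eq_zero.1 h2 with h | h
      · simp [pow_eq_zero_iff two_ne_zero |>.1 h]
      · simp [h]
    · have ht0 : t ≠ 0 := by
        rintro rfl
        simp [ha, psum, Real.zero_rpow hp0.ne'] at h0
      have h1 : -t * ppair p a b = psum p a := by
        rw [← ppair_self hp]
        simp only [ppair, Finset.mul_sum]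
        refine Finset.sum_congr rfl fun i _ => ?_
        have := congrFun ha i
        linear_combination -(|a i| ^ (p - 2) * a i) * this
      have h2 : psum p a ^ (2 / p - 1) * psum p a = psum p a ^ (2 / p) := by
        rw [← Real.rpow_add_one h0.ne']; simp
      apply mul_left_cancel₀ (neg_ne_zero.2 ht0)
      rw [hA] at h2
      linear_combination h2 + psum p a ^ (2 / p - 1) * h1
  rw [hS, hA, hJ]
  nlinarith

lemma wlpNorm_eq {M : ℕ} (p : ℝ) {w : Fin M → ℝ} (hw : ∀ i, 0 < w i) (b : Fin M → ℝ) :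
    wlpNorm p w b = psum p (fun i => w i * b i) ^ (1 / p) := by
  simp only [wlpNorm, psum]
  congr 1
  refine Finset.sum_congr rfl fun i _ => ?_
  rw [abs_mul, abs_of_pos (hw i), Real.mul_rpow (hw i).le (abs_nonneg _)]

/-- The norming functional of `ℓp`: it attains the norm at `a`, is bounded by Hölder, and controls
the norm near `a` to second order with constant `p - 1`. -/
lemma exists_duality {M : ℕ} {p : ℝ} (hp : 2 ≤ p) (w : Fin M → ℝ) (hw : ∀ i, 0 < w i)
    (a : Fin M → ℝ) : ∃ J : (Fin M → ℝ) →ₗ[ℝ] ℝ, J a = wlpNorm p w a ^ 2 ∧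
      (∀ b, |J b| ≤ wlpNorm p w a * wlpNorm p w b) ∧
      ∀ b, wlpNorm p w (a + b) ^ 2 ≤
        wlpNorm p w a ^ 2 + 2 * J b + (p - 1) * wlpNorm p w b ^ 2 := by
  have hp0 : 0 < p := by linarith
  have hn := wlpNorm_eq p hw
  have hn2 : ∀ b, wlpNorm p w b ^ 2 = psum p (fun i => w i * b i) ^ (2 / p) := fun b => by
    rw [hn, ← Real.rpow_two, ← Real.rpow_mul (psum_nonneg _ _)]
    congr 1; ring
  set α : Fin M → ℝ := fun i => w i * a i with hα
  have hA := psum_nonneg p α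
  refine ⟨{ toFun := fun b => psum p α ^ (2 / p - 1) * ppair p α (fun i => w i * b i)
            map_add' := ?_
            map_smul' := ?_ }, ?_, fun b => ?_, fun b => ?_⟩
  · intro b c
    rw [← mul_add]
    simp only [ppair, ← Finset.sum_add_distrib]
    congr 1
    exact Finset.sum_congr rfl fun i _ => by simp; ring
  · intro c b
    simp only [ppair, Finset.mul_sum, smul_eq_mul, RingHom.id_apply]
    exact Finset.sum_congr rfl fun i _ => by simp; ring
  · rw [hn2]
    change psum p α ^ (2 / p - 1) * ppair p α α = psum p α ^ (2 / p)
    rw [ppair_self hp]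
    rcases hA.eq_or_lt with h0 | h0
    · rw [← h0, mul_zero, Real.zero_rpow (by positivity)]
    · rw [← Real.rpow_add_one h0.ne']; simp
  · change |psum p α ^ (2 / p - 1) * ppair p α (fun i => w i * b i)| ≤ _
    rw [hn, hn, abs_mul, abs_of_nonneg (by positivity)]
    rcases hA.eq_or_lt with h0 | h0
    · have hz := psum_eq_zero hp0 h0.symm
      have : ppair p α (fun i => w i * b i) = 0 := by simp [ppair, hz]
      rw [this, abs_zero, mul_zero]
      exact mul_nonneg (Real.rpow_nonneg hA _) (Real.rpow_nonneg (psum_nonneg _ _) _)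
    · refine (mul_le_mul_of_nonneg_left (abs_ppair_le hp _ _) (by positivity)).trans (le_of_eq ?_)
      rw [← mul_assoc, ← Real.rpow_add h0]
      congr 2; ring
  · rw [hn2, hn2, hn2]
    refine le_trans (le_of_eq ?_) (smooth hp α (fun i => w i * b i))
    congr 2
    ext i
    simp [hα]; ring

lemma wlpNorm_nonneg {M : ℕ} (p : ℝ) {w : Fin M → ℝ} (hw : ∀ i, 0 < w i) (b : Fin M → ℝ) :
    0 ≤ wlpNorm p w b := by
  rw [wlpNorm_eq p hw]
  exact Real.rpow_nonneg (psum_nonneg _ _) _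

lemma wlpNorm_sub_le {M : ℕ} {p : ℝ} (hp : 2 ≤ p) {w : Fin M → ℝ} (hw : ∀ i, 0 < w i)
    (a b : Fin M → ℝ) : wlpNorm p w (a - b) ≤ wlpNorm p w a + wlpNorm p w b := by
  have := Real.Lp_add_le Finset.univ (fun i => w i * a i) (fun i => -(w i * b i))
    (by linarith : 1 ≤ p)
  rw [wlpNorm_eq p hw, wlpNorm_eq p hw, wlpNorm_eq p hw]
  simp only [abs_neg] at this
  simpa only [psum, Pi.sub_apply, mul_sub, ← sub_eq_add_neg] using this

/-! ### Restrictions and block decomposition -/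

/-- The restriction of `h` to the index set `A`, extended by zero. -/
def res {N : ℕ} (A : Finset (Fin N)) (h : Fin N → ℝ) : Fin N → ℝ :=
  fun i => if i ∈ A then h i else 0

/-- The Euclidean norm of the restriction of `h` to `A`. -/
noncomputable def l2on {N : ℕ} (A : Finset (Fin N)) (h : Fin N → ℝ) : ℝ :=
  √(∑ i ∈ A, h i ^ 2)

lemma l2on_nonneg {N : ℕ} (A : Finset (Fin N)) (h : Fin N → ℝ) : 0 ≤ l2on A h :=
  Real.sqrt_nonneg _

lemma l2on_sq {N : ℕ} (A : Finset (Fin N)) (h : Fin N → ℝ) : l2on A h ^ 2 = ∑ i ∈ A, h i ^ 2 :=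
  Real.sq_sqrt (Finset.sum_nonneg fun _ _ => sq_nonneg _)

lemma l2norm_res {N : ℕ} (A : Finset (Fin N)) (h : Fin N → ℝ) : l2norm (res A h) = l2on A h := by
  simp [l2norm, res, l2on, ite_pow]

lemma sparse_of_support {N s : ℕ} {A : Finset (Fin N)} {u : Fin N → ℝ} (hA : A.card ≤ s)
    (hu : ∀ i ∉ A, u i = 0) : Sparse s u := by
  refine (Finset.card_le_card fun i hi => ?_).trans hA
  by_contra h
  exact (Finset.mem_filter.1 hi).2 (hu i h)

lemma sparse_res {N s : ℕ} {A : Finset (Fin N)} (hA : A.card ≤ s) (h : Fin N → ℝ) :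
    Sparse s (res A h) :=
  sparse_of_support hA fun i hi => by simp [res, hi]

lemma res_union {N : ℕ} {A B : Finset (Fin N)} (hAB : Disjoint A B) (h : Fin N → ℝ) :
    res (A ∪ B) h = res A h + res B h := by
  ext i
  by_cases hA : i ∈ A
  · simp [res, hA, Finset.disjoint_left.1 hAB hA]
  · simp [res, hA]

lemma l2on_union_le {N : ℕ} {A B : Finset (Fin N)} (hAB : Disjoint A B) (h : Fin N → ℝ) :
    l2on (A ∪ B) h ≤ l2on A h + l2on B h := by
  rw [l2on, Finset.sum_union hAB, ← l2on_sq, ← l2on_sq]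
  have := l2on_nonneg A h
  have := l2on_nonneg B h
  exact Real.sqrt_le_iff.2 ⟨by positivity, by nlinarith⟩

lemma exists_top {N : ℕ} (h : Fin N → ℝ) (S : Finset (Fin N)) (k : ℕ) (hk : k ≤ S.card) :
    ∃ T ⊆ S, T.card = k ∧ ∀ i ∈ T, ∀ j ∈ S \ T, |h j| ≤ |h i| := by
  induction k with
  | zero => exact ⟨∅, by simp, rfl, by simp⟩
  | succ k ih =>
    obtain ⟨T, hTS, hc, hT⟩ := ih (by omega)
    have hne : (S \ T).Nonempty := by
      rw [← Finset.card_pos, Finset.card_sdiff_of_subset hTS]; omega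
    obtain ⟨m, hm, hmax⟩ := Finset.exists_max_image (S \ T) (fun i => |h i|) hne
    have hm' := Finset.mem_sdiff.1 hm
    refine ⟨insert m T, Finset.insert_subset hm'.1 hTS, by simp [hm'.2, hc], fun i hi j hj => ?_⟩
    have hj' : j ∈ S \ T := by
      simp only [Finset.mem_sdiff, Finset.mem_insert, not_or] at hj ⊢
      exact ⟨hj.1, hj.2.2⟩
    rcases Finset.mem_insert.1 hi with rfl | hi
    · exact hmax j hj'
    · exact hT i hi j hj'

/-- A block of at most `K` entries dominated by a block of exactly `K` entries. -/
lemma sqrt_mul_l2on_le {N K : ℕ} (hK : 1 ≤ K) (h : Fin N → ℝ) {T₁ T₂ : Finset (Fin N)}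
    (h₁ : T₁.card = K) (h₂ : T₂.card ≤ K) (hdom : ∀ i ∈ T₁, ∀ j ∈ T₂, |h j| ≤ |h i|) :
    √(K : ℝ) * l2on T₂ h ≤ ∑ i ∈ T₁, |h i| := by
  have hK0 : (0:ℝ) < K := by exact_mod_cast hK
  set m := ∑ i ∈ T₁, |h i| with hm
  have hm0 : 0 ≤ m := Finset.sum_nonneg fun _ _ => abs_nonneg _
  have hj : ∀ j ∈ T₂, K * |h j| ≤ m := fun j hj => by
    have := Finset.card_nsmul_le_sum T₁ (fun i => |h i|) |h j| fun i hi => hdom i hi j hj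
    rwa [h₁, nsmul_eq_mul] at this
  have hsum : ∑ j ∈ T₂, h j ^ 2 ≤ K * (m / K) ^ 2 := by
    have h3 := Finset.sum_le_card_nsmul T₂ (fun j => h j ^ 2) ((m / K) ^ 2) fun j hj' => by
      rw [← sq_abs]
      have : |h j| ≤ m / K := by rw [le_div_iff₀ hK0]; linarith [hj j hj']
      gcongr
    rw [nsmul_eq_mul] at h3
    refine h3.trans ?_
    gcongr
  refine abs_le_of_sq_le_sq' ?_ hm0 |>.2
  rw [mul_pow, Real.sq_sqrt hK0.le, l2on_sq]
  calc (K:ℝ) * ∑ j ∈ T₂, h j ^ 2 ≤ K * (K * (m / K) ^ 2) := by gcongr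
    _ = m ^ 2 := by field_simp

/-- Block decomposition. Removing from `S` the set `T` of its `K` largest entries, the remainder
splits into blocks of size `K` of decreasing magnitude, so a subadditive set function `G` dominated
on blocks of size `K` by `C` times the `ℓ2` norm satisfies
`G (S \ T) ≤ C * K ^ (-1/2) * ‖h_S‖₁`. The set `T` does not depend on `G`. -/
lemma exists_block {N K : ℕ} (hK : 1 ≤ K) (h : Fin N → ℝ) (S : Finset (Fin N)) :
    ∃ T ⊆ S, T.card ≤ K ∧ ∀ (G : Finset (Fin N) → ℝ) (C : ℝ), 0 ≤ C →
      (∀ A ⊆ S \ T, A.card ≤ K → G A ≤ C * l2on A h) →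
      (∀ A ⊆ S \ T, ∀ B ⊆ S \ T, Disjoint A B → G (A ∪ B) ≤ G A + G B) →
      √(K : ℝ) * G (S \ T) ≤ C * ∑ i ∈ S, |h i| := by
  induction S using Finset.strongInduction with
  | H S ih =>
    by_cases hS : S.card ≤ K
    · refine ⟨S, subset_rfl, hS, fun G C hC hG _ => ?_⟩
      have h0 := hG ∅ (by simp) (by simp)
      simp only [l2on, Finset.sum_empty, Real.sqrt_zero, mul_zero] at h0
      rw [Finset.sdiff_self]
      exact (mul_nonpos_of_nonneg_of_nonpos (Real.sqrt_nonneg _) h0).trans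
        (mul_nonneg hC (Finset.sum_nonneg fun _ _ => abs_nonneg _))
    · obtain ⟨T, hTS, hTc, hT⟩ := exists_top h S K (by omega)
      have hne : T.Nonempty := by rw [← Finset.card_pos]; omega
      obtain ⟨T', hT'S, hT'c, hT'⟩ := ih (S \ T) (Finset.sdiff_ssubset hTS hne)
      refine ⟨T, hTS, hTc.le, fun G C hC hG hadd => ?_⟩
      have hsub : (S \ T) \ T' ⊆ S \ T := Finset.sdiff_subset
      have h1 := hT' G C hC (fun A hA => hG A (hA.trans hsub))
        (fun A hA B hB => hadd A (hA.trans hsub) B (hB.trans hsub))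
      have h2 := hadd T' hT'S _ hsub Finset.disjoint_sdiff
      rw [Finset.union_sdiff_of_subset hT'S] at h2
      have h3 := hG T' hT'S hT'c
      have h4 := sqrt_mul_l2on_le hK h hTc hT'c fun i hi j hj => hT i hi j (hT'S hj)
      rw [← Finset.sum_sdiff hTS, mul_add]
      calc √(K:ℝ) * G (S \ T) ≤ √(K:ℝ) * (C * l2on T' h + G ((S \ T) \ T')) := by
            gcongr; linarith
        _ = C * (√(K:ℝ) * l2on T' h) + √(K:ℝ) * G ((S \ T) \ T') := by ring
        _ ≤ C * (∑ i ∈ T, |h i|) + C * ∑ i ∈ S \ T, |h i| := by gcongr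
        _ = _ := by ring

/-! ### Stability -/

lemma rip_sq {μ δ X L : ℝ} (hμ : 0 < μ) (hδ : δ ∈ Set.Ico (0:ℝ) 1) (hX : 0 ≤ X) (hL : 0 ≤ L)
    (h : √(1 - δ) * L ≤ μ⁻¹ * X ∧ μ⁻¹ * X ≤ √(1 + δ) * L) :
    (1 - δ) * (μ ^ 2 * L ^ 2) ≤ X ^ 2 ∧ X ^ 2 ≤ (1 + δ) * (μ ^ 2 * L ^ 2) := by
  obtain ⟨h1, h2⟩ := h
  have e1 : √(1 - δ) ^ 2 = 1 - δ := Real.sq_sqrt (by linarith [hδ.2])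
  have e2 : √(1 + δ) ^ 2 = 1 + δ := Real.sq_sqrt (by linarith [hδ.1])
  have eX : μ ^ 2 * (μ⁻¹ * X) ^ 2 = X ^ 2 := by field_simp
  constructor
  · have := mul_le_mul_of_nonneg_left (pow_le_pow_left₀ (by positivity) h1 2) (sq_nonneg μ)
    rw [eX, mul_pow, e1] at this
    linarith
  · have := mul_le_mul_of_nonneg_left (pow_le_pow_left₀ (by positivity) h2 2) (sq_nonneg μ)
    rw [eX, mul_pow, e2] at this
    linarith

/-- Cone condition: if `z` has no larger `ℓ1` norm than `x`, then the `ℓ1` mass of `z - x` off `T`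
is at most its mass on `T` plus twice that of `x` off `T`. -/
lemma cone {N : ℕ} (x z : Fin N → ℝ) (T : Finset (Fin N)) (h : l1norm z ≤ l1norm x) :
    ∑ i ∈ Tᶜ, |(z - x) i| ≤ ∑ i ∈ T, |(z - x) i| + 2 * ∑ i ∈ Tᶜ, |x i| := by
  have h1 : ∑ i ∈ T, |x i| ≤ ∑ i ∈ T, |z i| + ∑ i ∈ T, |(z - x) i| := by
    rw [← Finset.sum_add_distrib]
    refine Finset.sum_le_sum fun i _ => ?_
    have := abs_sub_abs_le_abs_sub (x i) (z i)
    rw [abs_sub_comm] at this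
    simp only [Pi.sub_apply]; linarith
  have h2 : ∑ i ∈ Tᶜ, |(z - x) i| ≤ ∑ i ∈ Tᶜ, |z i| + ∑ i ∈ Tᶜ, |x i| := by
    rw [← Finset.sum_add_distrib]
    exact Finset.sum_le_sum fun i _ => abs_sub _ _
  simp only [l1norm] at h
  rw [← Finset.sum_add_sum_compl T, ← Finset.sum_add_sum_compl T (fun i => |x i|)] at h
  linarith

/-- The final numerical step: `u` is the error on the head, `E` the scaled compressibility error,
`η` the scaled noise level, `c` the almost-orthogonality constant and `r = √(1 + δ)`. -/
lemma numeric {u E η δ c r : ℝ} (hu : 0 ≤ u) (hE : 0 ≤ E) (hη : 0 ≤ η) (hδ : 0 ≤ δ)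
    (hδc : δ + c < 1 / 3) (hr : r ≤ 4 / 3)
    (h : (1 - δ) * u ^ 2 ≤ 2 * r * u * η + c * u * (u + 2 * E)) : u ≤ E + 4 * η := by
  rcases hu.eq_or_lt with rfl | hu
  · positivity
  have h1 : (1 - δ - c) * u ≤ 2 * r * η + 2 * c * E := by
    refine le_of_mul_le_mul_left ?_ hu
    linarith
  nlinarith [mul_nonneg (sub_nonneg.2 hr) hη, mul_nonneg (by linarith : 0 ≤ 1 / 3 - c) hE,
    mul_nonneg (by linarith : 0 ≤ 1 / 3 - δ - c) (by positivity : 0 ≤ E + 4 * η),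
    mul_nonneg (by linarith : 0 ≤ 1 / 3 - δ - c) hu.le]

theorem gbpdn_stability
    {M N : ℕ} (K : ℕ) (hK : 1 ≤ K) (p : ℝ) (hp : 2 ≤ p)
    (Φ : Matrix (Fin M) (Fin N) ℝ) (w : Fin M → ℝ) (hw : ∀ i, 0 < w i)
    (μ : ℝ) (hμ : 0 < μ)
    (δK δ2K δ3K : ℝ)
    (hδK : δK ∈ Set.Ico (0:ℝ) 1) (hδ2K : δ2K ∈ Set.Ico (0:ℝ) 1)
    (hδ3K : δ3K ∈ Set.Ico (0:ℝ) 1)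
    (hRIPK : ∀ u : Fin N → ℝ, Sparse K u →
      Real.sqrt (1 - δK) * l2norm u ≤ μ⁻¹ * wlpNorm p w (Φ.mulVec u) ∧
      μ⁻¹ * wlpNorm p w (Φ.mulVec u) ≤ Real.sqrt (1 + δK) * l2norm u)
    (hRIP2K : ∀ u : Fin N → ℝ, Sparse (2 * K) u →
      Real.sqrt (1 - δ2K) * l2norm u ≤ μ⁻¹ * wlpNorm p w (Φ.mulVec u) ∧
      μ⁻¹ * wlpNorm p w (Φ.mulVec u) ≤ Real.sqrt (1 + δ2K) * l2norm u)
    (hRIP3K : ∀ u : Fin N → ℝ, Sparse (3 * K) u →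
      Real.sqrt (1 - δ3K) * l2norm u ≤ μ⁻¹ * wlpNorm p w (Φ.mulVec u) ∧
      μ⁻¹ * wlpNorm p w (Φ.mulVec u) ≤ Real.sqrt (1 + δ3K) * l2norm u)
    (hcond : δ2K + Real.sqrt ((1 + δK) * (δ2K + δ3K) * (p - 1)) < 1 / 3)
    (x : Fin N → ℝ) (ε : ℝ) (hε : 0 ≤ ε) (e : Fin M → ℝ)
    (he : wlpNorm p w e ≤ ε)
    (y : Fin M → ℝ) (hy : y = Φ.mulVec x + e)
    (xK : Fin N → ℝ) (hxK : Sparse K xK)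
    (hxKbest : ∀ z : Fin N → ℝ, Sparse K z → l1norm (x - xK) ≤ l1norm (x - z))
    (xstar : Fin N → ℝ)
    (hfeas : wlpNorm p w (y - Φ.mulVec xstar) ≤ ε)
    (hmin : ∀ u : Fin N → ℝ, wlpNorm p w (y - Φ.mulVec u) ≤ ε →
      l1norm xstar ≤ l1norm u) :
    l2norm (xstar - x) ≤ 4 * (K : ℝ) ^ (-(1:ℝ) / 2) * l1norm (x - xK) + 8 * ε / μ := by
  have hK0 : (0:ℝ) < K := by exact_mod_cast hK
  have hsK : 0 < √(K:ℝ) := Real.sqrt_pos.2 hK0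
  set h := xstar - x with hh
  set E := l1norm (x - xK) with hE
  have hE0 : 0 ≤ E := Finset.sum_nonneg fun _ _ => abs_nonneg _
  set T₀ : Finset (Fin N) := Finset.univ.filter fun i => xK i ≠ 0 with hT₀
  have hT₀c : T₀.card ≤ K := hxK
  obtain ⟨T, hTS, hTc, hT⟩ := exists_block hK h T₀ᶜ
  set U := T₀ ∪ T with hU
  have hR : T₀ᶜ \ T = Uᶜ := by ext i; simp [hU]
  rw [hR] at hT
  have hUc : U.card ≤ 2 * K := (Finset.card_union_le _ _).trans (by omega)
  set Q := ∑ i ∈ T₀ᶜ, |h i| with hQ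
  set u := l2on U h with hu
  have hu0 : 0 ≤ u := l2on_nonneg _ _
  -- `x` is feasible, so the minimizer obeys the cone condition.
  have hQle : Q ≤ √(K:ℝ) * u + 2 * E := by
    have hfx : wlpNorm p w (y - Φ.mulVec x) ≤ ε := by rw [hy, add_sub_cancel_left]; exact he
    have h1 := cone x xstar T₀ (hmin x hfx)
    have h2 : ∑ i ∈ T₀ᶜ, |x i| ≤ E := by
      refine le_trans (Finset.sum_le_sum fun i hi => ?_)
        (Finset.sum_le_univ_sum_of_nonneg fun i => abs_nonneg ((x - xK) i))
      have : xK i = 0 := by simpa [hT₀] using hi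
      simp [this]
    have h3 : ∑ i ∈ T₀, |h i| ≤ √(K:ℝ) * u := by
      refine abs_le_of_sq_le_sq' ?_ (by positivity) |>.2
      rw [mul_pow, Real.sq_sqrt hK0.le, hu, l2on_sq]
      refine (sq_sum_le_card_mul_sum_sq).trans ?_
      simp only [sq_abs]
      have : (T₀.card : ℝ) ≤ K := by exact_mod_cast hT₀c
      have : ∑ i ∈ T₀, h i ^ 2 ≤ ∑ i ∈ U, h i ^ 2 :=
        Finset.sum_le_sum_of_subset_of_nonneg Finset.subset_union_left fun _ _ _ => sq_nonneg _
      gcongr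
    linarith
  -- The block decomposition with the set function `A ↦ ‖h_A‖₂`; it is used again in `hblock` with
  -- `A ↦ -J (Φ h_A)`.
  have htail : √(K:ℝ) * l2on Uᶜ h ≤ Q := by
    have := hT (fun A => l2on A h) 1 zero_le_one (fun A _ _ => by simp)
      (fun A _ B _ hAB => l2on_union_le hAB h)
    simpa using this
  have hsplit : h = res U h + res Uᶜ h := by
    rw [← res_union disjoint_compl_right, Finset.union_compl]; ext; simp [res]
  have htotal : l2norm h ≤ u + l2on Uᶜ h := by
    have := l2on_union_le (disjoint_compl_right : Disjoint U Uᶜ) h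
    rwa [Finset.union_compl] at this
  have hnoise : wlpNorm p w (Φ.mulVec h) ≤ 2 * ε := by
    have : Φ.mulVec h = e - (y - Φ.mulVec xstar) := by
      rw [hh, Matrix.mulVec_sub, hy]; abel
    rw [this]
    linarith [wlpNorm_sub_le hp hw e (y - Φ.mulVec xstar)]
  set a := Φ.mulVec (res U h) with ha
  obtain ⟨J, hJa, hJle, hJs⟩ := exists_duality hp w hw a
  set c := √((1 + δK) * (δ2K + δ3K) * (p - 1)) with hc
  have hc0 : 0 ≤ c := Real.sqrt_nonneg _
  have hc2 : c ^ 2 = (1 + δK) * (δ2K + δ3K) * (p - 1) := Real.sq_sqrt (by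
    have := hδK.1; have := hδ2K.1; have := hδ3K.1
    have : 0 ≤ p - 1 := by linarith
    positivity)
  have hl2 : ∀ v : Fin N → ℝ, 0 ≤ l2norm v := fun v => Real.sqrt_nonneg _
  have hW : ∀ v, 0 ≤ wlpNorm p w v := wlpNorm_nonneg p hw
  obtain ⟨ha_lo, ha_hi⟩ := rip_sq hμ hδ2K (hW _) (hl2 _) (hRIP2K _ (sparse_res hUc h))
  have ha_le := (hRIP2K _ (sparse_res hUc h)).2
  rw [l2norm_res, ← hu, ← ha] at ha_lo ha_hi ha_le
  -- Almost orthogonality of disjointly supported sparse vectors: optimizing `t` in the smoothness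
  -- inequality for `a + t Φ v` is the nonpositivity of a discriminant.
  have hcross : ∀ A ⊆ Uᶜ, A.card ≤ K →
      -J (Φ.mulVec (res A h)) ≤ (c * μ ^ 2 * u) * l2on A h := by
    intro A hA hAc
    set v := l2on A h with hv
    have hv0 : 0 ≤ v := l2on_nonneg _ _
    set β := J (Φ.mulVec (res A h)) with hβ
    have hdisj : Disjoint U A := (Finset.disjoint_left.2 fun i hi hiA =>
      Finset.mem_compl.1 (hA hiA) hi)
    have hd := discrim_le_zero (a := (p - 1) * ((1 + δK) * (μ ^ 2 * v ^ 2))) (b := 2 * β)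
      (c := (δ2K + δ3K) * (μ ^ 2 * u ^ 2)) fun t => by
      have hsp : Sparse (3 * K) (res U h + res A (t • h)) := by
        refine sparse_of_support (A := U ∪ A) ((Finset.card_union_le _ _).trans (by omega)) ?_
        intro i hi
        simp only [Finset.mem_union, not_or] at hi
        simp [res, hi.1, hi.2]
      have hl : l2norm (res U h + res A (t • h)) ^ 2 = u ^ 2 + t ^ 2 * v ^ 2 := by
        rw [l2norm, Real.sq_sqrt (Finset.sum_nonneg fun _ _ => sq_nonneg _), hu, hv, l2on_sq,
          l2on_sq, Finset.mul_sum]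
        have e : ∀ i, (res U h + res A (t • h)) i ^ 2
            = (if i ∈ U then h i ^ 2 else 0) + (if i ∈ A then t ^ 2 * h i ^ 2 else 0) := by
          intro i
          by_cases hi : i ∈ U
          · simp [res, hi, Finset.disjoint_left.1 hdisj hi]
          · by_cases hi' : i ∈ A <;> simp [res, hi, hi', mul_pow]
        simp only [e, Finset.sum_add_distrib, Finset.sum_ite_mem, Finset.univ_inter]
      have hts : res A (t • h) = t • res A h := by ext i; simp [res]
      obtain ⟨h3, -⟩ := rip_sq hμ hδ3K (hW _) (hl2 _) (hRIP3K _ hsp)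
      obtain ⟨-, h1⟩ := rip_sq hμ hδK (hW _) (hl2 _) (hRIPK _ (sparse_res hAc (t • h)))
      have hs := hJs (Φ.mulVec (res A (t • h)))
      rw [ha, ← Matrix.mulVec_add, ← ha] at hs
      have hlt : l2norm (res A (t • h)) ^ 2 = t ^ 2 * v ^ 2 := by
        rw [l2norm_res, l2on_sq, hv, l2on_sq, Finset.mul_sum]
        simp [mul_pow]
      rw [hl] at h3
      rw [hlt] at h1
      have hJt : J (Φ.mulVec (res A (t • h))) = t * β := by
        rw [hts, Matrix.mulVec_smul, map_smul, smul_eq_mul]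
      rw [hJt] at hs
      have h4 := mul_le_mul_of_nonneg_left h1 (by linarith : 0 ≤ p - 1)
      have h5 : 0 ≤ (1 - δ3K) * (μ ^ 2 * (t ^ 2 * v ^ 2)) :=
        mul_nonneg (by linarith [hδ3K.2]) (by positivity)
      linarith
    rw [discrim] at hd
    have : (-β) ^ 2 ≤ (c * μ ^ 2 * u * v) ^ 2 := by
      have e : (c * μ ^ 2 * u * v) ^ 2 = c ^ 2 * (μ ^ 2 * u * v) ^ 2 := by ring
      rw [e, hc2]
      linarith
    exact (abs_le_of_sq_le_sq' this (by positivity)).2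
  have hblock := hT (fun A => -J (Φ.mulVec (res A h))) (c * μ ^ 2 * u) (by positivity) hcross
    fun A _ B _ hAB => le_of_eq (by rw [res_union hAB, Matrix.mulVec_add, map_add]; ring)
  have hmain : wlpNorm p w a ^ 2 ≤ wlpNorm p w a * (2 * ε) + (-J (Φ.mulVec (res Uᶜ h))) := by
    have h1 : J (Φ.mulVec h) = J a + J (Φ.mulVec (res Uᶜ h)) := by
      conv_lhs => rw [hsplit]
      rw [Matrix.mulVec_add, map_add]
    have h2 := (le_abs_self _).trans (hJle (Φ.mulVec h))
    have h3 := mul_le_mul_of_nonneg_left hnoise (hW a)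
    linarith
  have hr : √(1 + δ2K) ≤ 4 / 3 := Real.sqrt_le_iff.2 ⟨by norm_num, by linarith⟩
  have hfin : u ≤ E / √(K:ℝ) + 4 * (ε / μ) := by
    refine numeric (δ := δ2K) (c := c) (r := √(1 + δ2K)) hu0 (by positivity) (by positivity)
      hδ2K.1 hcond hr ?_
    have ha' : wlpNorm p w a ≤ μ * (√(1 + δ2K) * u) := by
      rwa [inv_mul_le_iff₀ hμ] at ha_le
    have hb : -J (Φ.mulVec (res Uᶜ h)) ≤ c * μ ^ 2 * u * (u + 2 * (E / √(K:ℝ))) := by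
      refine le_of_mul_le_mul_left ?_ hsK
      refine hblock.trans ?_
      have : √(K:ℝ) * (c * μ ^ 2 * u * (u + 2 * (E / √(K:ℝ))))
          = c * μ ^ 2 * u * (√(K:ℝ) * u + 2 * E) := by field_simp
      rw [this]
      gcongr
    have hn := mul_le_mul_of_nonneg_right ha' (by linarith : 0 ≤ 2 * ε)
    refine le_of_mul_le_mul_left ?_ (by positivity : 0 < μ ^ 2)
    have e : μ ^ 2 * (2 * √(1 + δ2K) * u * (ε / μ) + c * u * (u + 2 * (E / √(K:ℝ))))
        = μ * (√(1 + δ2K) * u) * (2 * ε) + c * μ ^ 2 * u * (u + 2 * (E / √(K:ℝ))) := by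
      field_simp
    rw [e]
    linarith
  have ht : l2on Uᶜ h ≤ u + 2 * (E / √(K:ℝ)) := by
    refine le_of_mul_le_mul_left ?_ hsK
    have : √(K:ℝ) * (u + 2 * (E / √(K:ℝ))) = √(K:ℝ) * u + 2 * E := by field_simp
    linarith
  have hpow : (K:ℝ) ^ (-(1:ℝ) / 2) = 1 / √(K:ℝ) := by
    rw [neg_div, Real.rpow_neg hK0.le, Real.sqrt_eq_rpow, one_div, one_div]
  have : 4 * (K:ℝ) ^ (-(1:ℝ) / 2) * E + 8 * ε / μ = 4 * (E / √(K:ℝ)) + 8 * (ε / μ) := by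
    rw [hpow]; ring
  linarith
end

section
/- Let p ≥ 1, M ≥ 1 an integer, w ∈ ℝ^M a vector of positive weights, ξ a standard Gaussian random vector in ℝ^M, and Z a standard Gaussian random variable with ν_p := (E|Z|^p)^{1/p}. Define θ_p := (M^{1/p}‖w‖_∞/‖w‖_p)². Then E‖ξ‖_{p,w}^p = ν_p^p·‖w‖_p^p, and (1 + 2^{p+1}·θ_p^p·M^{−1})^{(1/p)−1}·ν_p·‖w‖_p ≤ E‖ξ‖_{p,w} ≤ ν_p·‖w‖_p, where ν_p^p = E|Z|^p = 2^{p/2}·π^{−1/2}·Γ((p+1)/2). -/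
/-!
Write `X = ∑ i, w i ^ p * |ξ i| ^ p`, so that `wlpNorm p w ξ = X ^ (1 / p)` and, by linearity,
`E[X] = νpp * ∑ i, w i ^ p`. The upper bound is Jensen's inequality for `x ↦ x ^ (1 / p)`, in
tangent-line form (`rpow_integral_upper`).

For the lower bound, let `EQ` be the expectation under the law with density `X / E[X]`. Then
`E[X ^ (1 / p)] = E[X] * EQ[X ^ (1 / p - 1)]` and `x ↦ x ^ (1 / p - 1)` is convex, so Jensen gives
`E[X ^ (1 / p)] ≥ E[X] * (E[X ^ 2] / E[X]) ^ (1 / p - 1)`; this is `rpow_integral_lower`, again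
proved with a tangent line. The second moment of `X` is controlled by independence:
`Var[X] = ∑ i, w i ^ (2 * p) * Var[|Z| ^ p] ≤ M * ‖w‖_∞ ^ (2 * p) * E[|Z| ^ (2 * p)]`.
Finally `E[|Z| ^ (2 * p)] ≤ 2 ^ p * E[|Z| ^ p] ^ 2` (`gaussian_abs_moment_two_mul_le`) follows from
the formula for the absolute moments, Legendre's duplication formula and the log-convexity of `Γ`.
-/

open Finset MeasureTheory ProbabilityTheory

/-- Law of a standard Gaussian random vector in ℝ^M (i.i.d. N(0,1) entries). -/
noncomputable def stdGaussianVec (M : ℕ) : Measure (Fin M → ℝ) :=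
  Measure.pi fun _ => gaussianReal 0 1

/-- The weighting dynamic θ_p = (M^{1/p}‖w‖_∞/‖w‖_p)². -/
noncomputable def weightDyn (p : ℝ) {M : ℕ} (w : Fin M → ℝ) : ℝ :=
  (((M : ℝ) ^ (1 / p) * (⨆ i, w i)) / (∑ i, w i ^ p) ^ (1 / p)) ^ 2

theorem integrable_abs_rpow_gaussian {q : ℝ} (hq : 0 < q) :
    Integrable (fun x : ℝ => |x| ^ q) (gaussianReal 0 1) := by
  have h := (memLp_id_gaussianReal' (μ := 0) (v := 1) (ENNReal.ofReal q) ENNReal.ofReal_ne_top)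
  have h2 := h.integrable_norm_rpow (by simpa using hq) ENNReal.ofReal_ne_top
  simpa [ENNReal.toReal_ofReal hq.le] using h2

theorem gaussian_abs_moment {q : ℝ} (hq : 0 < q) :
    ∫ x, |x| ^ q ∂gaussianReal 0 1 =
      2 ^ (q / 2) * Real.pi ^ (-(1:ℝ) / 2) * Real.Gamma ((q + 1) / 2) := by
  rw [integral_gaussianReal_eq_integral_smul one_ne_zero]
  have e1 : ∀ x : ℝ, gaussianPDFReal 0 1 x • |x| ^ q =
      (fun y : ℝ => (√(2 * Real.pi))⁻¹ * (y ^ q * Real.exp (-(1 / 2) * y ^ (2 : ℝ)))) |x| := by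
    intro x
    simp only [gaussianPDFReal_def, smul_eq_mul, NNReal.coe_one, mul_one, sub_zero,
      Real.rpow_two, sq_abs]
    rw [show -x ^ 2 / 2 = -(1 / 2) * x ^ 2 by ring]
    ring
  rw [integral_congr_ae (ae_of_all _ e1),
    integral_comp_abs (f := fun y : ℝ => (√(2 * Real.pi))⁻¹ *
      (y ^ q * Real.exp (-(1 / 2) * y ^ (2 : ℝ)))), integral_const_mul,
    integral_rpow_mul_exp_neg_mul_rpow two_pos (by linarith) (by norm_num)]
  have h2 : ((1:ℝ) / 2) ^ (-(q + 1) / 2) = 2 ^ (q / 2) * √2 := by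
    rw [one_div, Real.inv_rpow two_pos.le, ← Real.rpow_neg two_pos.le, Real.sqrt_eq_rpow,
      ← Real.rpow_add two_pos]
    congr 1; ring
  have h3 : Real.pi ^ (-(1:ℝ) / 2) = (√Real.pi)⁻¹ := by
    rw [Real.sqrt_eq_rpow, ← Real.rpow_neg Real.pi_pos.le]
    congr 1; ring
  rw [h2, h3, Real.sqrt_mul two_pos.le]
  have := Real.sqrt_pos.2 Real.pi_pos
  have := Real.sqrt_pos.2 (two_pos : (0:ℝ) < 2)
  field_simp

/-- Log-convexity of `Γ` at the midpoint of `s` and `s + 1`. -/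
theorem gamma_add_half_sq_le {s : ℝ} (hs : 0 < s) :
    Real.Gamma (s + 1 / 2) ^ 2 ≤ s * Real.Gamma s ^ 2 := by
  have h := Real.Gamma_mul_add_mul_le_rpow_Gamma_mul_rpow_Gamma hs (by linarith : 0 < s + 1)
    (a := 1 / 2) (b := 1 / 2) (by norm_num) (by norm_num) (by norm_num)
  have hG := Real.Gamma_pos_of_pos hs
  have hG' := Real.Gamma_pos_of_pos (by linarith : 0 < s + 1)
  rw [show 1 / 2 * s + 1 / 2 * (s + 1) = s + 1 / 2 by ring, ← Real.sqrt_eq_rpow,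
    ← Real.sqrt_eq_rpow] at h
  have h1 := pow_le_pow_left₀ (Real.Gamma_pos_of_pos (by linarith : 0 < s + 1 / 2)).le h 2
  rw [mul_pow, Real.sq_sqrt hG.le, Real.sq_sqrt hG'.le, Real.Gamma_add_one hs.ne'] at h1
  linarith

theorem gaussian_abs_moment_two_mul_le {p : ℝ} (hp : 1 ≤ p) :
    ∫ x, |x| ^ (2 * p) ∂gaussianReal 0 1 ≤ 2 ^ p * (∫ x, |x| ^ p ∂gaussianReal 0 1) ^ 2 := by
  have hp0 : 0 < p := by linarith
  rw [gaussian_abs_moment (by linarith), gaussian_abs_moment hp0]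
  have hpi : Real.pi ^ (-(1:ℝ) / 2) = (√Real.pi)⁻¹ := by
    rw [Real.sqrt_eq_rpow, ← Real.rpow_neg Real.pi_pos.le]
    congr 1; ring
  have h2p : ((2:ℝ) ^ (p / 2)) ^ 2 = 2 ^ p := by
    rw [← Real.rpow_natCast, ← Real.rpow_mul two_pos.le]; congr 1; push_cast; ring
  have hdup := Real.Gamma_mul_Gamma_add_half ((p + 1) / 2)
  rw [show 2 * ((p + 1) / 2) = p + 1 by ring, show 1 - (p + 1) = -p by ring,
    Real.rpow_neg two_pos.le, Real.Gamma_add_one hp0.ne'] at hdup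
  have hA := gamma_add_half_sq_le hp0
  have hB := gamma_add_half_sq_le (by linarith : 0 < (p + 1) / 2)
  have hs := Real.sqrt_pos.2 Real.pi_pos
  have h2pos : (0:ℝ) < 2 ^ p := by positivity
  have ha := Real.Gamma_pos_of_pos (by linarith : 0 < p + 1 / 2)
  have hb := Real.Gamma_pos_of_pos (by linarith : 0 < (p + 1) / 2)
  have hc := Real.Gamma_pos_of_pos (by linarith : 0 < (p + 1) / 2 + 1 / 2)
  have hd := Real.Gamma_pos_of_pos hp0
  rw [show 2 * p / 2 = p by ring, show (2 * p + 1) / 2 = p + 1 / 2 by ring, mul_pow, mul_pow, h2p,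
    hpi]
  generalize Real.Gamma (p + 1 / 2) = a at *
  generalize Real.Gamma ((p + 1) / 2) = b at *
  generalize Real.Gamma ((p + 1) / 2 + 1 / 2) = c at *
  generalize Real.Gamma p = d at *
  generalize √Real.pi = s at *
  generalize (2:ℝ) ^ p = t at *
  -- Multiplying the two log-convexity bounds and eliminating `c` and `d` by duplication.
  have key : s * a ≤ t * b ^ 2 := by
    have hdup' : p * d * s = t * (b * c) := by rw [hdup]; field_simp
    have h1 : (p * s * a) ^ 2 ≤ (p * (t * b ^ 2)) ^ 2 := by
      calc (p * s * a) ^ 2 = p ^ 2 * s ^ 2 * a ^ 2 := by ring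
        _ ≤ p ^ 2 * s ^ 2 * (p * d ^ 2) := by gcongr
        _ = p * (p * d * s) ^ 2 := by ring
        _ = p * t ^ 2 * b ^ 2 * c ^ 2 := by rw [hdup']; ring
        _ ≤ p * t ^ 2 * b ^ 2 * ((p + 1) / 2 * b ^ 2) := by gcongr
        _ ≤ p * t ^ 2 * b ^ 2 * (p * b ^ 2) := by gcongr; linarith
        _ = _ := by ring
    have h3 := (pow_le_pow_iff_left₀ (by positivity) (by positivity) two_ne_zero).1 h1
    refine le_of_mul_le_mul_left ?_ hp0
    linarith
  have : t * s⁻¹ * a = t * s⁻¹ ^ 2 * (s * a) := by field_simp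
  rw [this]
  calc t * s⁻¹ ^ 2 * (s * a) ≤ t * s⁻¹ ^ 2 * (t * b ^ 2) := by gcongr
    _ = _ := by ring

section Moments

variable {Ω : Type*} [MeasurableSpace Ω] {μ : Measure Ω} [IsProbabilityMeasure μ]

theorem integrable_rpow_one_div {X : Ω → ℝ} (hX0 : ∀ x, 0 ≤ X x) (hX : Integrable X μ) {p : ℝ}
    (hp : 1 ≤ p) : Integrable (fun x => X x ^ (1 / p)) μ := by
  have hp' : 1 / p ≤ 1 := by rw [div_le_one (by linarith)]; exact hp
  have hp0 : 0 < 1 / p := by positivity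
  refine (hX.add (integrable_const 1)).mono
    (hX.aemeasurable.pow_const _).aestronglyMeasurable (ae_of_all _ fun x => ?_)
  have h0 := hX0 x
  have h := rpow_one_add_le_one_add_mul_self (s := X x - 1) (by linarith) hp0.le hp'
  rw [show 1 + (X x - 1) = X x by ring] at h
  simp only [Pi.add_apply]
  rw [Real.norm_of_nonneg (by positivity), Real.norm_of_nonneg (by positivity)]
  nlinarith

/-- Jensen's inequality for `x ↦ x ^ (1 / p)`. -/
theorem rpow_integral_upper {X : Ω → ℝ} (hX0 : ∀ x, 0 ≤ X x) (hX : Integrable X μ) {p A : ℝ}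
    (hp : 1 ≤ p) (hA : 0 < A) (hEX : ∫ x, X x ∂μ = A) :
    ∫ x, X x ^ (1 / p) ∂μ ≤ A ^ (1 / p) := by
  have hp' : 1 / p ≤ 1 := by rw [div_le_one (by linarith)]; exact hp
  have hp0 : 0 < 1 / p := by positivity
  have hpt : ∀ x, X x ^ (1 / p) ≤ A ^ (1 / p) * (1 - 1 / p) + A ^ (1 / p) * (1 / p) / A * X x := by
    intro x
    have h0 : 0 ≤ X x / A := div_nonneg (hX0 x) hA.le
    have h := rpow_one_add_le_one_add_mul_self (s := X x / A - 1) (by linarith) hp0.le hp'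
    rw [show 1 + (X x / A - 1) = X x / A by ring, Real.div_rpow (hX0 x) hA.le,
      div_le_iff₀ (by positivity)] at h
    refine h.trans (le_of_eq ?_)
    ring
  calc ∫ x, X x ^ (1 / p) ∂μ
      ≤ ∫ x, (A ^ (1 / p) * (1 - 1 / p) + A ^ (1 / p) * (1 / p) / A * X x) ∂μ :=
        integral_mono (integrable_rpow_one_div hX0 hX hp)
          ((integrable_const _).add (hX.const_mul _)) hpt
    _ = A ^ (1 / p) := by
        rw [integral_add (integrable_const _) (hX.const_mul _), integral_const_mul (A ^ (1 / p) * (1 / p) / A),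
          hEX]
        simp only [integral_const, probReal_univ, one_smul]
        field_simp
        ring

/-- A bound `E[X ^ 2] ≤ B * E[X] ^ 2` bounds `E[X ^ (1 / p)]` from below: this is
Jensen's inequality for the convex function `x ↦ x ^ (1 / p - 1)` under the law reweighted by `X`. -/
theorem rpow_integral_lower {X : Ω → ℝ} (hX0 : ∀ x, 0 ≤ X x) (hX : MemLp X 2 μ) {p A B : ℝ}
    (hp : 1 ≤ p) (hA : 0 < A) (hB : 0 < B) (hEX : ∫ x, X x ∂μ = A)
    (hEX2 : ∫ x, X x ^ 2 ∂μ ≤ B * A ^ 2) :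
    B ^ (1 / p - 1) * A ^ (1 / p) ≤ ∫ x, X x ^ (1 / p) ∂μ := by
  have hp' : 1 / p ≤ 1 := by rw [div_le_one (by linarith)]; exact hp
  have hp0 : 0 < 1 / p := by positivity
  have hX1 : Integrable X μ := hX.integrable (by norm_num)
  have hX2 : Integrable (fun x => X x ^ 2) μ := hX.integrable_sq
  set r := 1 / p with hr
  set m := B * A with hm
  have hmpos : 0 < m := by positivity
  set K := m ^ (r - 1) with hK
  have hKpos : 0 < K := by positivity
  have hpt : ∀ x, K * (1 - (r - 1)) * X x + K * (r - 1) / m * X x ^ 2 ≤ X x ^ r := by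
    intro x
    rcases (hX0 x).eq_or_lt with h0 | h0
    · rw [← h0, Real.zero_rpow hp0.ne']; simp
    have hy : 0 < X x / m := by positivity
    -- The tangent line to the convex function `y ↦ y ^ (r - 1)` at `y = 1`.
    have h1 : 1 + (r - 1) * (X x / m - 1) ≤ (X x / m) ^ (r - 1) := by
      rw [Real.rpow_def_of_pos hy]
      have := Real.add_one_le_exp (Real.log (X x / m) * (r - 1))
      have := Real.log_le_sub_one_of_pos hy
      nlinarith
    rw [Real.div_rpow h0.le hmpos.le, le_div_iff₀ (by positivity)] at h1
    have h2 : X x ^ r = X x ^ (r - 1) * X x := by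
      rw [Real.rpow_sub_one h0.ne']; field_simp
    rw [h2]
    refine le_trans (le_of_eq ?_) (mul_le_mul_of_nonneg_right h1 h0.le)
    rw [hK]
    ring
  have hval : ∫ x, (K * (1 - (r - 1)) * X x + K * (r - 1) / m * X x ^ 2) ∂μ =
      K * (1 - (r - 1)) * A + K * (r - 1) / m * ∫ x, X x ^ 2 ∂μ := by
    rw [integral_add (hX1.const_mul _) (hX2.const_mul _), integral_const_mul, integral_const_mul,
      hEX]
  have hle := integral_mono ((hX1.const_mul _).add (hX2.const_mul _))
    (integrable_rpow_one_div hX0 hX1 hp) hpt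
  rw [← hr] at hle
  refine le_trans ?_ (hval.symm.le.trans hle)
  have hcoef : K * (r - 1) / m ≤ 0 :=
    div_nonpos_of_nonpos_of_nonneg (mul_nonpos_of_nonneg_of_nonpos hKpos.le (by linarith)) hmpos.le
  have h3 := mul_le_mul_of_nonpos_left hEX2 hcoef
  have h4 : K * (r - 1) / m * (B * A ^ 2) = K * (r - 1) * A := by
    rw [hm]; field_simp
  have h5 : B ^ (r - 1) * A ^ r = K * A := by
    rw [hK, hm, Real.mul_rpow hB.le hA.le, Real.rpow_sub_one hA.ne']; field_simp
  rw [h5]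
  linarith

end Moments

theorem gaussian_wlp_norm_expectation
    (p : ℝ) (hp : 1 ≤ p) (M : ℕ) (hM : 1 ≤ M)
    (w : Fin M → ℝ) (hw : ∀ i, 0 < w i)
    (νpp : ℝ) (hν : νpp = ∫ x, |x| ^ p ∂gaussianReal 0 1) :
    (∫ ξ, (∑ i, w i ^ p * |ξ i| ^ p) ∂stdGaussianVec M) = νpp * ∑ i, w i ^ p ∧
    νpp = 2 ^ (p / 2) * Real.pi ^ (-(1:ℝ) / 2) * Real.Gamma ((p + 1) / 2) ∧
    (1 + 2 ^ (p + 1) * weightDyn p w ^ p / (M : ℝ)) ^ (1 / p - 1) *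
        (νpp ^ (1 / p) * (∑ i, w i ^ p) ^ (1 / p)) ≤
      (∫ ξ, wlpNorm p w ξ ∂stdGaussianVec M) ∧
    (∫ ξ, wlpNorm p w ξ ∂stdGaussianVec M) ≤ νpp ^ (1 / p) * (∑ i, w i ^ p) ^ (1 / p) := by
  have hp0 : 0 < p := by linarith
  have hMne : Nonempty (Fin M) := ⟨⟨0, hM⟩⟩
  have hMpos : (0:ℝ) < M := by exact_mod_cast hM
  have hprob : IsProbabilityMeasure (stdGaussianVec M) := by
    unfold stdGaussianVec; infer_instance
  set S := ∑ i, w i ^ p with hS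
  have hSpos : 0 < S := Finset.sum_pos (fun i _ => Real.rpow_pos_of_pos (hw i) p) univ_nonempty
  have hform := gaussian_abs_moment hp0
  rw [← hν] at hform
  have hνpos : 0 < νpp := by
    rw [hform]
    have := Real.Gamma_pos_of_pos (by linarith : 0 < (p + 1) / 2)
    have := Real.pi_pos
    positivity
  have hm2 := gaussian_abs_moment_two_mul_le hp
  rw [← hν] at hm2
  have hsq : ∀ x : ℝ, (|x| ^ p) ^ 2 = |x| ^ (2 * p) := fun x => by
    rw [← Real.rpow_natCast, ← Real.rpow_mul (abs_nonneg x)]; congr 1; push_cast; ring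
  have hint : Integrable (fun x : ℝ => |x| ^ p) (gaussianReal 0 1) :=
    integrable_abs_rpow_gaussian hp0
  have hL2 : MemLp (fun x : ℝ => |x| ^ p) 2 (gaussianReal 0 1) := by
    rw [memLp_two_iff_integrable_sq hint.aestronglyMeasurable]
    simp_rw [hsq]
    exact integrable_abs_rpow_gaussian (by linarith)
  have hLi : ∀ i, MemLp (fun x : ℝ => w i ^ p * |x| ^ p) 2 (gaussianReal 0 1) :=
    fun i => hL2.const_mul _
  have hX : MemLp (fun ξ : Fin M → ℝ => ∑ i, w i ^ p * |ξ i| ^ p) 2 (stdGaussianVec M) :=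
    memLp_finsetSum _ fun i _ => (hLi i).comp_measurePreserving (measurePreserving_eval _ i)
  have hX1 := hX.integrable (by norm_num)
  have hX0 : ∀ ξ : Fin M → ℝ, 0 ≤ ∑ i, w i ^ p * |ξ i| ^ p := fun ξ =>
    Finset.sum_nonneg fun i _ => mul_nonneg (Real.rpow_nonneg (hw i).le _)
      (Real.rpow_nonneg (abs_nonneg _) _)
  have hEX : (∫ ξ, (∑ i, w i ^ p * |ξ i| ^ p) ∂stdGaussianVec M) = νpp * S := by
    have hi : ∀ i ∈ (univ : Finset (Fin M)),
        Integrable (fun ξ : Fin M → ℝ => w i ^ p * |ξ i| ^ p) (stdGaussianVec M) := fun i _ =>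
      ((hLi i).comp_measurePreserving (measurePreserving_eval _ i)).integrable (by norm_num)
    rw [integral_finsetSum _ hi, hS, Finset.mul_sum]
    refine Finset.sum_congr rfl fun i _ => ?_
    have := integral_comp_eval (μ := fun _ : Fin M => gaussianReal 0 1) (i := i)
      (f := fun x : ℝ => w i ^ p * |x| ^ p) (hLi i).aestronglyMeasurable
    simp only [stdGaussianVec]
    rw [this, integral_const_mul, ← hν, mul_comm]
  have hvar : Var[fun ξ : Fin M → ℝ => ∑ i, w i ^ p * |ξ i| ^ p; stdGaussianVec M] ≤
      ∑ i, (w i ^ p) ^ 2 * (2 ^ p * νpp ^ 2) := by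
    have h := variance_sum_pi (μ := fun _ : Fin M => gaussianReal 0 1) hLi
    have e : (∑ i, fun ω : Fin M → ℝ => w i ^ p * |ω i| ^ p) =
        fun ξ : Fin M → ℝ => ∑ i, w i ^ p * |ξ i| ^ p := by
      ext ξ; simp
    rw [e] at h
    rw [stdGaussianVec, h]
    refine Finset.sum_le_sum fun i _ => ?_
    rw [variance_const_mul]
    refine mul_le_mul_of_nonneg_left ?_ (by positivity)
    refine (variance_le_expectation_sq hint.aestronglyMeasurable).trans ?_
    simpa [hsq] using hm2
  set W := ⨆ i, w i with hW
  have hwW : ∀ i, w i ≤ W := fun i => le_ciSup (Set.finite_range w).bddAbove i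
  have hWpos : 0 < W := (hw _).trans_le (hwW (Classical.arbitrary _))
  have hθ : weightDyn p w ^ p = (M * W ^ p / S) ^ 2 := by
    rw [weightDyn, ← hS, ← hW]
    have h1 : 0 ≤ (M:ℝ) ^ (1 / p) * W / S ^ (1 / p) := by positivity
    rw [← Real.rpow_natCast, ← Real.rpow_mul h1, mul_comm _ p, Real.rpow_mul h1, Real.rpow_natCast,
      Real.div_rpow (by positivity) (by positivity), Real.mul_rpow (by positivity) hWpos.le,
      ← Real.rpow_mul hMpos.le, ← Real.rpow_mul hSpos.le, one_div_mul_cancel hp0.ne',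
      Real.rpow_one, Real.rpow_one]
  have hsum : ∑ i, (w i ^ p) ^ 2 * (2 ^ p * νpp ^ 2) ≤ M * (W ^ p) ^ 2 * (2 ^ p * νpp ^ 2) := by
    rw [← Finset.sum_mul]
    refine mul_le_mul_of_nonneg_right ?_ (by positivity)
    calc ∑ i, (w i ^ p) ^ 2 ≤ ∑ _i : Fin M, (W ^ p) ^ 2 := by
          refine Finset.sum_le_sum fun i _ => ?_
          exact pow_le_pow_left₀ (Real.rpow_nonneg (hw i).le _)
            (Real.rpow_le_rpow (hw i).le (hwW i) hp0.le) 2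
      _ = _ := by simp
  have hEX2 : (∫ ξ, (∑ i, w i ^ p * |ξ i| ^ p) ^ 2 ∂stdGaussianVec M) ≤
      (1 + 2 ^ (p + 1) * weightDyn p w ^ p / (M : ℝ)) * (νpp * S) ^ 2 := by
    have hv := variance_eq_sub hX
    simp only [Pi.pow_apply] at hv
    rw [hEX] at hv
    have e : (1 + 2 ^ (p + 1) * weightDyn p w ^ p / (M : ℝ)) * (νpp * S) ^ 2 =
        (νpp * S) ^ 2 + 2 * (M * (W ^ p) ^ 2 * (2 ^ p * νpp ^ 2)) := by
      rw [hθ, Real.rpow_add_one two_ne_zero]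
      field_simp
    have hnn : 0 ≤ M * (W ^ p) ^ 2 * (2 ^ p * νpp ^ 2) := by positivity
    rw [e]
    linarith
  have hA : 0 < νpp * S := by positivity
  rw [← Real.mul_rpow hνpos.le hSpos.le]
  refine ⟨hEX, hform, ?_, ?_⟩
  · refine rpow_integral_lower hX0 hX hp hA ?_ hEX hEX2
    rw [hθ]; positivity
  · exact rpow_integral_upper hX0 hX1 hp hA hEX
end

section
/- Let p ≥ 1 and let Y be a nonnegative real random variable with 0 < E[Y^p] < ∞ and E[Y^{2p}] < ∞. Then E[Y] ≥ (E[Y^p])^{1/p}·(1 + Var(Y^p)/(E[Y^p])²)^{(1/p)−1}. -/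
open MeasureTheory

/-!
Write `X = Y ^ p`, `A = E[X]`, `B = E[X²]`, `s = 1 / p - 1 ≤ 0` and `c = B / A`. The left-hand side
equals `A * c ^ s`, so the claim is Jensen's inequality for the convex function `x ↦ x ^ s` under the
size-biased probability measure `X dμ / A`, whose mean is `c`. Concretely, the tangent line of
`x ↦ x ^ s` at `c` (Bernoulli's inequality with nonpositive exponent, which follows from
`u ^ s = exp (s * log u) ≥ 1 + s * log u ≥ 1 + s * (u - 1)`) multiplied by `x` gives the pointwise bound
`c ^ s * (X + s * (X² / c - X)) ≤ X * X ^ s = Y`; the correction term has mean `B / c - A = 0`.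
-/

/-- The tangent line of the convex function `x ↦ x ^ s`, `s ≤ 0`, at `c`, multiplied by `x`. -/
lemma tangent_mul_le_rpow {s c x : ℝ} (hs : s ≤ 0) (hs1 : -1 < s) (hc : 0 < c) (hx : 0 ≤ x) :
    c ^ s * (x + s * (x ^ 2 / c - x)) ≤ x ^ (1 + s) := by
  rcases hx.eq_or_lt with rfl | hx
  · simp [Real.zero_rpow (by linarith : (1 + s) ≠ 0)]
  have hb : 1 + s * (x / c - 1) ≤ (x / c) ^ s := by
    have hu : 0 < x / c := div_pos hx hc
    have hlog := mul_le_mul_of_nonpos_left (Real.log_le_sub_one_of_pos hu) hs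
    have hexp := Real.add_one_le_exp (Real.log (x / c) * s)
    rw [Real.rpow_def_of_pos hu]
    linarith
  calc c ^ s * (x + s * (x ^ 2 / c - x)) = c ^ s * x * (1 + s * (x / c - 1)) := by
        field_simp
    _ ≤ c ^ s * x * (x / c) ^ s := by gcongr
    _ = x ^ (1 + s) := by
        rw [Real.div_rpow hx.le hc.le, Real.rpow_add hx, Real.rpow_one]
        have := (Real.rpow_pos_of_pos hc s).ne'
        field_simp

theorem mean_lower_bound_via_p_moment
    {Ω : Type*} [MeasurableSpace Ω] (μ : Measure Ω) [IsProbabilityMeasure μ]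
    (p : ℝ) (hp : 1 ≤ p) (Y : Ω → ℝ) (hYmeas : Measurable Y) (hYpos : ∀ ω, 0 ≤ Y ω)
    (hYp : Integrable (fun ω => Y ω ^ p) μ)
    (hY2p : Integrable (fun ω => Y ω ^ (2 * p)) μ)
    (hpos : 0 < ∫ ω, Y ω ^ p ∂μ) :
    (∫ ω, Y ω ^ p ∂μ) ^ (1 / p) *
        (1 + ((∫ ω, (Y ω ^ p) ^ 2 ∂μ) - (∫ ω, Y ω ^ p ∂μ) ^ 2) /
            (∫ ω, Y ω ^ p ∂μ) ^ 2) ^ (1 / p - 1) ≤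
      ∫ ω, Y ω ∂μ := by
  have hp0 : 0 < p := by linarith
  have hX2 : Integrable (fun ω => (Y ω ^ p) ^ 2) μ := by
    refine hY2p.congr (.of_forall fun ω => ?_)
    simp only
    rw [mul_comm, Real.rpow_mul (hYpos ω), Real.rpow_two]
  -- `Y ≤ 1 + Y ^ p` makes the right-hand integral a genuine one.
  have hY : Integrable Y μ := by
    refine ((integrable_const (1 : ℝ)).add hYp).mono' hYmeas.aestronglyMeasurable
      (.of_forall fun ω => ?_)
    rw [Real.norm_of_nonneg (hYpos ω)]
    have h0 := Real.rpow_nonneg (hYpos ω) p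
    change Y ω ≤ 1 + Y ω ^ p
    rcases le_total (Y ω) 1 with h | h
    · linarith
    · have := Real.self_le_rpow_of_one_le h hp
      linarith
  set A := ∫ ω, Y ω ^ p ∂μ with hA
  set B := ∫ ω, (Y ω ^ p) ^ 2 ∂μ with hB
  set s := 1 / p - 1 with hs
  have hp1 : 1 / p ≤ 1 := by rw [div_le_one hp0]; exact hp
  have hpinv : 0 < 1 / p := by positivity
  -- Otherwise `Y ^ p` vanishes almost everywhere, contradicting `0 < A`.
  have hBpos : 0 < B := by
    refine (integral_nonneg fun ω => sq_nonneg _).lt_of_ne' fun h => hpos.ne' ?_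
    rw [integral_eq_zero_iff_of_nonneg (fun ω => sq_nonneg _) hX2] at h
    refine integral_eq_zero_of_ae (h.mono fun ω hω => ?_)
    simpa using hω
  have hc : 0 < B / A := by positivity
  have hlhs : A ^ (1 / p) * (1 + (B - A ^ 2) / A ^ 2) ^ s = (B / A) ^ s * A := by
    have h1 : 1 + (B - A ^ 2) / A ^ 2 = (B / A) / A := by field_simp; ring
    have h2 : 1 / p = 1 + s := by rw [hs]; ring
    rw [h1, h2, Real.div_rpow hc.le hpos.le, Real.rpow_add hpos, Real.rpow_one]
    have := (Real.rpow_pos_of_pos hpos s).ne'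
    field_simp
  have hint : Integrable (fun ω => (Y ω ^ p) ^ 2 / (B / A) - Y ω ^ p) μ :=
    (hX2.div_const _).sub hYp
  have hval : ∫ ω, (B / A) ^ s * (Y ω ^ p + s * ((Y ω ^ p) ^ 2 / (B / A) - Y ω ^ p)) ∂μ
      = (B / A) ^ s * A := by
    rw [integral_const_mul, integral_add hYp (hint.const_mul s), integral_const_mul,
      integral_sub (hX2.div_const _) hYp, integral_div, ← hA, ← hB]
    have : B / (B / A) - A = 0 := by field_simp; ring
    rw [this]; ring
  rw [hlhs, ← hval]
  refine integral_mono ((hYp.add (hint.const_mul s)).const_mul _) hY fun ω => ?_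
  refine (tangent_mul_le_rpow (by linarith) (by linarith) hc
    (Real.rpow_nonneg (hYpos ω) p)).trans_eq ?_
  rw [← Real.rpow_mul (hYpos ω), hs, show p * (1 + (1 / p - 1)) = 1 by field_simp; ring,
    Real.rpow_one]
end
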